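/- Define c : [0,1]² → [0,∞] by c(x,y) = ∞ if x < y, c(x,y) = 1 if x = y, and c(x,y) = 0 if x > y. If f_1 and f_2 are Lebesgue-integrable functions on [0,1] with f_1(x) + f_2(y) ≤ c(x,y) for all (x,y) ∈ [0,1]², then m(f_1) + m(f_2) ≤ 0; on the other hand, inf_{Q ∈ Γ} Q(c) = 1, so there is a duality gap over σ-additive couplings. In contrast, inf_{Q ∈ M} Q(c) = 0, attained by any finitely additive P ∈ M with P(π_1 > π_2) = 1, and duality holds over M. -/

import Mathlib

open MeasureTheory Set ENNReal

namespace FATransport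

variable {α : Type*} [MeasurableSpace α]

/-- The collection of measurable sets of `α` (the σ-field `𝒜`), as a type. -/
abbrev MSet (α : Type*) [MeasurableSpace α] := {A : Set α // MeasurableSet A}

/-- A finitely additive probability on the σ-field of `α`, viewed as an element
of `[0,1]^𝒜`: it maps the whole space to `1` and is additive on disjoint pairs. -/
def IsFAP (P : MSet α → unitInterval) : Prop :=
  (P ⟨Set.univ, MeasurableSet.univ⟩ : ℝ) = 1 ∧
    ∀ A B : MSet α, Disjoint A.1 B.1 →
      (P ⟨A.1 ∪ B.1, A.2.union B.2⟩ : ℝ) = (P A : ℝ) + (P B : ℝ)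

/-- Integral of a simple function with respect to a finitely additive set function. -/
noncomputable def simpleInt (P : MSet α → unitInterval) (s : SimpleFunc α ℝ) : ℝ :=
  ∑ y ∈ s.range, y * (P ⟨(⇑s) ⁻¹' {y}, s.measurableSet_fiber y⟩ : ℝ)

/-- `P(f)` for a bounded measurable `f : α → ℝ`: the supremum of the integrals of
simple functions below `f` (for a f.a.p. `P` and bounded measurable `f` this agrees
with the integral defined by uniform approximation by simple functions). -/
noncomputable def fapInt (P : MSet α → unitInterval) (f : α → ℝ) : ℝ :=
  sSup (simpleInt P '' {s : SimpleFunc α ℝ | ∀ x, s x ≤ f x})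

/-- `P(c) = sup_k P(c ∧ k)` for a `[0,∞]`-valued `c`. -/
noncomputable def fapIntTop (P : MSet α → unitInterval) (c : α → ℝ≥0∞) : ℝ≥0∞ :=
  ⨆ k : ℕ, ENNReal.ofReal (fapInt P (fun x => (c x ⊓ (k : ℝ≥0∞)).toReal))

/-- `P(f) = P(f⁺) - P(f⁻)` for a (`P`-integrable) real-valued `f`. -/
noncomputable def fapIntR (P : MSet α → unitInterval) (f : α → ℝ) : ℝ :=
  (fapIntTop P (fun x => ENNReal.ofReal (f x))).toReal -
    (fapIntTop P (fun x => ENNReal.ofReal (-f x))).toReal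

/-- Lebesgue measure `m` on `ℬ([0,1])`. -/
noncomputable def mI : Measure unitInterval := volume

/-- The diagonal coupling `T ∈ Γ`, i.e. the image of `m` under `x ↦ (x,x)`. -/
noncomputable def TI : Measure (unitInterval × unitInterval) :=
  mI.map (fun x => (x, x))

/-- `P` has both marginals equal to Lebesgue measure `m` on `[0,1]`. -/
def HasLebesgueMarginals (P : MSet (unitInterval × unitInterval) → unitInterval) : Prop :=
  (∀ (B : Set unitInterval) (hB : MeasurableSet B),
    (P ⟨Prod.fst ⁻¹' B, measurable_fst hB⟩ : ℝ) = (mI B).toReal) ∧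
  (∀ (B : Set unitInterval) (hB : MeasurableSet B),
    (P ⟨Prod.snd ⁻¹' B, measurable_snd hB⟩ : ℝ) = (mI B).toReal)

/-- The set `{(x,y) ∈ [0,1]² : x > y}`. -/
def Sgt : Set (unitInterval × unitInterval) := {p | (p.2 : ℝ) < (p.1 : ℝ)}

/-- The set `{(x,y) ∈ [0,1]² : x < y}`. -/
def Slt : Set (unitInterval × unitInterval) := {p | (p.1 : ℝ) < (p.2 : ℝ)}

/-- The set `{(x,y) ∈ [0,1]² : x ≤ y}`. -/
def Sle : Set (unitInterval × unitInterval) := {p | (p.1 : ℝ) ≤ (p.2 : ℝ)}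

/-- The diagonal `{(x,y) ∈ [0,1]² : x = y}`. -/
def Sdiag : Set (unitInterval × unitInterval) := {p | (p.1 : ℝ) = (p.2 : ℝ)}

lemma measSgt : MeasurableSet Sgt :=
  measurableSet_lt (measurable_subtype_coe.comp measurable_snd)
    (measurable_subtype_coe.comp measurable_fst)

lemma measSlt : MeasurableSet Slt :=
  measurableSet_lt (measurable_subtype_coe.comp measurable_fst)
    (measurable_subtype_coe.comp measurable_snd)

lemma measSle : MeasurableSet Sle :=
  measurableSet_le (measurable_subtype_coe.comp measurable_fst)
    (measurable_subtype_coe.comp measurable_snd)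

lemma measSdiag : MeasurableSet Sdiag :=
  measurableSet_eq_fun (measurable_subtype_coe.comp measurable_fst)
    (measurable_subtype_coe.comp measurable_snd)

end FATransport

namespace FATransport

/-- The cost `c(x,y) = ∞` if `x < y`, `= 1` if `x = y`, `= 0` if `x > y`. -/
noncomputable def cEx (p : unitInterval × unitInterval) : ℝ≥0∞ :=
  if (p.1 : ℝ) < (p.2 : ℝ) then ⊤ else if (p.1 : ℝ) = (p.2 : ℝ) then 1 else 0

/-!
If `f₁ x + f₂ y ≤ 0` for all `y < x`, the intervals `(-f₁ x, f₂ x)` are pairwise disjoint, so all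
but countably many of them are empty; hence `f₁ + f₂ ≤ 0` almost everywhere for any atomless
measure, which bounds the dual problem.

A σ-additive coupling `Q` of `m` with itself and `Q(c) < ∞` is carried by `{x ≥ y}`. Two random
variables with the same law, one of which dominates the other, are almost surely equal, so `Q`
lives on the diagonal, where `c = 1`.

Translating the circle `ℝ/ℤ` by `-ε` gives couplings of `m` with itself for which `x > y` has
probability at least `1 - ε`. As `[0,1]^𝒜` is compact and the finitely additive probabilities form
a closed subset of it, these couplings have a cluster point as `ε → 0`, and it is an element of `M`
for which `x > y` has probability `1`.
-/

open Filter Topology ProbabilityTheory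

section DualBound

variable {α : Type*} [LinearOrder α] {f g : α → ℝ}

lemma countable_setOf_add_pos (h : ∀ x y, y < x → f x + g y ≤ 0) :
    {x | 0 < f x + g x}.Countable := by
  have disjoint_Ioo_of_lt {x y : α} (hyx : y < x) :
      Disjoint (Ioo (-f x) (g x)) (Ioo (-f y) (g y)) := by
    rw [Ioo_disjoint_Ioo]
    have := h x y hyx
    exact (min_le_right _ _).trans (le_max_of_le_left (by linarith))
  refine PairwiseDisjoint.countable_of_isOpen (s := fun x => Ioo (-f x) (g x)) ?_
    (fun _ _ => isOpen_Ioo) (fun x (hx : 0 < f x + g x) => nonempty_Ioo.2 (by linarith))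
  intro x _ y _ hxy
  rcases hxy.lt_or_gt with hlt | hgt
  · exact (disjoint_Ioo_of_lt hlt).symm
  · exact disjoint_Ioo_of_lt hgt

lemma integral_add_integral_nonpos [MeasurableSpace α] {μ : Measure α} [NullSingletonClass μ]
    (hf : Integrable f μ) (hg : Integrable g μ) (h : ∀ x y, y < x → f x + g y ≤ 0) :
    (∫ x, f x ∂μ) + (∫ x, g x ∂μ) ≤ 0 := by
  rw [← integral_add hf hg]
  refine integral_nonpos_of_ae ?_
  filter_upwards [(countable_setOf_add_pos h).ae_notMem μ] with x hx
  exact not_lt.1 hx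

end DualBound

lemma ae_eq_of_identDistrib_of_ae_le {Ω : Type*} [MeasurableSpace Ω] {μ : Measure Ω}
    [IsFiniteMeasure μ] {f g : Ω → ℝ} (hfg : IdentDistrib f g μ μ) (hle : f ≤ᵐ[μ] g) :
    f =ᵐ[μ] g := by
  -- `arctan` makes both variables bounded, so equal laws give equal expectations.
  have harctan := hfg.comp Real.measurable_arctan
  have hint : Integrable (Real.arctan ∘ f) μ :=
    Integrable.of_bound harctan.aemeasurable_fst.aestronglyMeasurable (Real.pi / 2)
      (Eventually.of_forall fun x => abs_le.2
        ⟨(Real.neg_pi_div_two_lt_arctan (f x)).le, (Real.arctan_lt_pi_div_two (f x)).le⟩)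
  have hle' : Real.arctan ∘ f ≤ᵐ[μ] Real.arctan ∘ g := by
    filter_upwards [hle] with x hx
    exact Real.arctan_strictMono.monotone hx
  have heq := (integral_eq_iff_of_ae_le hint (harctan.integrable_iff.1 hint) hle').1
    harctan.integral_eq
  filter_upwards [heq] with x hx
  exact Real.arctan_injective hx

section FinitelyAdditive

variable {α : Type*} [MeasurableSpace α] {P : MSet α → unitInterval}

/-- A probability measure regarded as an element of `[0,1]^𝒜`. -/
noncomputable def fapOfMeasure (μ : Measure α) [IsProbabilityMeasure μ] :
    MSet α → unitInterval :=
  fun A => ⟨μ.real A, measureReal_nonneg, measureReal_le_one⟩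

lemma isFAP_fapOfMeasure (μ : Measure α) [IsProbabilityMeasure μ] : IsFAP (fapOfMeasure μ) :=
  ⟨probReal_univ, fun _ B hAB => measureReal_union hAB B.2⟩

lemma isClosed_setOf_isFAP : IsClosed {P : MSet α → unitInterval | IsFAP P} := by
  have continuous_eval (A : MSet α) :
      Continuous fun P : MSet α → unitInterval => (P A : ℝ) :=
    continuous_subtype_val.comp (continuous_apply A)
  simp only [IsFAP, ofPred_and, ofPred_forall]
  exact (isClosed_eq (continuous_eval _) continuous_const).inter <|
    isClosed_iInter fun A => isClosed_iInter fun B => isClosed_iInter fun _ =>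
      isClosed_eq (continuous_eval _) ((continuous_eval A).add (continuous_eval B))

lemma exists_isFAP_eq_of_tendsto {ι : Type*} (l : Filter ι) [l.NeBot] (Q : ι → Measure α)
    [∀ i, IsProbabilityMeasure (Q i)] :
    ∃ P : MSet α → unitInterval, IsFAP P ∧
      ∀ (A : MSet α) (r : ℝ), Tendsto (fun i => (Q i).real A) l (𝓝 r) → (P A : ℝ) = r := by
  let U := Ultrafilter.of l
  obtain ⟨P, hP, hlim⟩ := isClosed_setOf_isFAP.isCompact.ultrafilter_le_nhds
    (U.map fun i => fapOfMeasure (Q i))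
    (le_principal_iff.2 (Ultrafilter.mem_map.2 (univ_mem' fun i => isFAP_fapOfMeasure (Q i))))
  refine ⟨P, hP, fun A r hr => tendsto_nhds_unique ?_ (hr.mono_left (Ultrafilter.of_le l))⟩
  have tendsto_eval : Tendsto (fun i => fapOfMeasure (Q i) A) U (𝓝 (P A)) :=
    ((continuous_apply A).tendsto P).comp hlim
  exact (continuous_subtype_val.tendsto _).comp tendsto_eval

lemma IsFAP.apply_eq_zero_of_disjoint (hP : IsFAP P) {A B : MSet α} (hB : (P B : ℝ) = 1)
    (hAB : Disjoint A.1 B.1) : (P A : ℝ) = 0 := by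
  have hunion := hP.2 A B hAB
  have hunion_le := (P ⟨A.1 ∪ B.1, A.2.union B.2⟩).2.2
  have hA := (P A).2.1
  linarith

lemma IsFAP.simpleInt_nonpos (hP : IsFAP P) {B : MSet α} (hB : (P B : ℝ) = 1)
    {s : SimpleFunc α ℝ} (hs : ∀ x ∈ B.1, s x ≤ 0) : simpleInt P s ≤ 0 := by
  refine Finset.sum_nonpos fun y _ => ?_
  rcases le_or_gt y 0 with hy | hy
  · exact mul_nonpos_of_nonpos_of_nonneg hy (P _).2.1
  · have hfiber : Disjoint (s ⁻¹' {y}) B.1 := by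
      refine disjoint_left.2 fun x (hx : s x = y) hxB => ?_
      exact (hs x hxB).not_gt (hx ▸ hy)
    rw [hP.apply_eq_zero_of_disjoint hB hfiber, mul_zero]

lemma IsFAP.fapIntTop_eq_zero (hP : IsFAP P) {B : MSet α} (hB : (P B : ℝ) = 1)
    {c : α → ℝ≥0∞} (hc : ∀ x ∈ B.1, c x = 0) : fapIntTop P c = 0 := by
  refine ENNReal.iSup_eq_zero.2 fun k => ENNReal.ofReal_eq_zero.2 (Real.sSup_nonpos ?_)
  rintro _ ⟨s, hs, rfl⟩
  refine hP.simpleInt_nonpos hB fun x hx => (hs x).trans_eq ?_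
  simp [hc x hx]

end FinitelyAdditive

instance : IsProbabilityMeasure mI :=
  inferInstanceAs (IsProbabilityMeasure (volume : Measure unitInterval))

instance : NullSingletonClass mI :=
  inferInstanceAs (NullSingletonClass (volume : Measure unitInterval))

section Cost

lemma measurable_cEx : Measurable cEx :=
  Measurable.ite measSlt measurable_const (Measurable.ite measSdiag measurable_const
    measurable_const)

lemma cEx_eq_zero_of_mem_Sgt {p : unitInterval × unitInterval} (hp : p ∈ Sgt) : cEx p = 0 := by
  have hp' : (p.2 : ℝ) < p.1 := hp
  rw [cEx, if_neg hp'.not_gt, if_neg hp'.ne']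

lemma snd_le_fst_of_cEx_ne_top {p : unitInterval × unitInterval} (hp : cEx p ≠ ⊤) :
    (p.2 : ℝ) ≤ p.1 :=
  not_lt.1 fun hlt => hp (if_pos hlt)

lemma cEx_eq_one_of_fst_eq_snd {p : unitInterval × unitInterval} (hp : (p.1 : ℝ) = p.2) :
    cEx p = 1 := by
  rw [cEx, if_neg hp.not_lt, if_pos hp]

lemma measure_univ_le_lintegral_cEx {Q : Measure (unitInterval × unitInterval)}
    [IsFiniteMeasure Q] (hQ : Q.map Prod.fst = Q.map Prod.snd) : Q univ ≤ ∫⁻ p, cEx p ∂Q := by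
  by_cases hfin : ∫⁻ p, cEx p ∂Q = ⊤
  · exact hfin ▸ le_top
  have hlaw : IdentDistrib (fun p => (p.2 : ℝ)) (fun p => (p.1 : ℝ)) Q Q :=
    IdentDistrib.comp (f := Prod.snd) (g := Prod.fst)
      ⟨measurable_snd.aemeasurable, measurable_fst.aemeasurable, hQ.symm⟩ measurable_subtype_coe
  have hle : ∀ᵐ p ∂Q, (p.2 : ℝ) ≤ p.1 := by
    filter_upwards [ae_lt_top measurable_cEx hfin] with p hp
    exact snd_le_fst_of_cEx_ne_top hp.ne
  have hone : cEx =ᵐ[Q] 1 := by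
    filter_upwards [ae_eq_of_identDistrib_of_ae_le hlaw hle] with p hp
    exact cEx_eq_one_of_fst_eq_snd hp.symm
  rw [lintegral_congr_ae hone, Pi.one_def, lintegral_one]

lemma lintegral_cEx_TI_le : ∫⁻ p, cEx p ∂TI ≤ 1 := by
  refine (lintegral_map_le _ _).trans_eq ?_
  simp [cEx_eq_one_of_fst_eq_snd]

lemma iInf_lintegral_cEx_eq_one :
    (⨅ Q : {Q : Measure (unitInterval × unitInterval) // IsProbabilityMeasure Q ∧
      Q.map Prod.fst = mI ∧ Q.map Prod.snd = mI}, ∫⁻ p, cEx p ∂Q.1) = 1 := by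
  have hdiag : Measurable fun x : unitInterval => (x, x) := by fun_prop
  apply le_antisymm
  · exact iInf_le_of_le ⟨TI, Measure.isProbabilityMeasure_map hdiag.aemeasurable,
      (Measure.map_map measurable_fst hdiag).trans Measure.map_id,
      (Measure.map_map measurable_snd hdiag).trans Measure.map_id⟩ lintegral_cEx_TI_le
  · exact le_iInf fun ⟨Q, hQ, hfst, hsnd⟩ =>
      measure_univ.symm.trans_le (measure_univ_le_lintegral_cEx (hfst.trans hsnd.symm))

end Cost

section Shift

/-- The representative in `(0,1] ⊆ [0,1]` of a point of the circle `ℝ/ℤ`. -/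
noncomputable def circleRep (z : UnitAddCircle) : unitInterval :=
  ⟨AddCircle.equivIoc 1 0 z, (AddCircle.equivIoc 1 0 z).2.1.le, by
    simpa using (AddCircle.equivIoc (1 : ℝ) 0 z).2.2⟩

lemma circleRep_coe {x : unitInterval} (hx : 0 < x) :
    circleRep ((x : ℝ) : UnitAddCircle) = x :=
  Subtype.ext (AddCircle.equivIoc_coe_of_mem ⟨hx, by simpa using x.2.2⟩)

lemma coe_circleRep (z : UnitAddCircle) : ((circleRep z : ℝ) : UnitAddCircle) = z :=
  (AddCircle.equivIoc 1 0).symm_apply_apply z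

lemma circleRep_sub_lt {ε : unitInterval} (hε : 0 < ε) {z : UnitAddCircle}
    (hz : ε < circleRep z) : circleRep (z - ((ε : ℝ) : UnitAddCircle)) < circleRep z := by
  have hε' : (0 : ℝ) < ε := hε
  have hz' : (ε : ℝ) < circleRep z := hz
  let x : unitInterval := ⟨circleRep z - ε, by linarith, by linarith [(circleRep z).2.2]⟩
  have hx : z - ((ε : ℝ) : UnitAddCircle) = ((x : ℝ) : UnitAddCircle) := by
    rw [AddCircle.coe_sub, coe_circleRep]
  rw [hx, circleRep_coe (show (0 : ℝ) < circleRep z - ε by linarith)]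
  exact sub_lt_self _ hε'

lemma measurePreserving_coe_circle :
    MeasurePreserving (fun x : unitInterval => ((x : ℝ) : UnitAddCircle)) mI volume := by
  have hmk := UnitAddCircle.measurePreserving_mk 0
  rw [zero_add, Measure.restrict_congr_set Ioc_ae_eq_Icc] at hmk
  exact hmk.comp unitInterval.measurePreserving_coe

lemma measurable_circleRep : Measurable circleRep :=
  (measurable_subtype_coe.comp (AddCircle.measurableEquivIoc 1 0).measurable).subtype_mk

lemma measurePreserving_circleRep : MeasurePreserving circleRep volume mI := by
  have hleftInv : circleRep ∘ (fun x : unitInterval => ((x : ℝ) : UnitAddCircle)) =ᵐ[mI] id := by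
    filter_upwards [(countable_singleton (0 : unitInterval)).ae_notMem mI] with x hx
    exact circleRep_coe (unitInterval.pos_iff_ne_zero.2 hx)
  rw [← measurePreserving_coe_circle.map_eq]
  exact ((MeasurePreserving.id mI).congr
    (measurable_circleRep.comp measurePreserving_coe_circle.measurable)
    hleftInv.symm).map_of_comp measurable_circleRep measurePreserving_coe_circle.measurable

/-- The coupling of Lebesgue measure with itself given by the joint law of a uniform point of the
circle and its translate by `-ε`, both read in `[0,1]`. -/
noncomputable def shiftCoupling (ε : unitInterval) : Measure (unitInterval × unitInterval) :=
  (volume : Measure UnitAddCircle).map fun z =>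
    (circleRep z, circleRep (z - ((ε : ℝ) : UnitAddCircle)))

lemma measurePreserving_circleRep_sub (ε : unitInterval) :
    MeasurePreserving (fun z => circleRep (z - ((ε : ℝ) : UnitAddCircle))) volume mI :=
  measurePreserving_circleRep.comp (measurePreserving_sub_right volume _)

lemma measurable_shift (ε : unitInterval) :
    Measurable fun z => (circleRep z, circleRep (z - ((ε : ℝ) : UnitAddCircle))) :=
  measurable_circleRep.prodMk (measurePreserving_circleRep_sub ε).measurable

instance (ε : unitInterval) : IsProbabilityMeasure (shiftCoupling ε) :=
  have : IsProbabilityMeasure (volume : Measure UnitAddCircle) := ⟨UnitAddCircle.measure_univ⟩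
  Measure.isProbabilityMeasure_map (measurable_shift ε).aemeasurable

lemma map_fst_shiftCoupling (ε : unitInterval) : (shiftCoupling ε).map Prod.fst = mI :=
  (Measure.map_map measurable_fst (measurable_shift ε)).trans measurePreserving_circleRep.map_eq

lemma map_snd_shiftCoupling (ε : unitInterval) : (shiftCoupling ε).map Prod.snd = mI :=
  (Measure.map_map measurable_snd (measurable_shift ε)).trans
    (measurePreserving_circleRep_sub ε).map_eq

lemma one_sub_le_shiftCoupling_Sgt {ε : unitInterval} (hε : 0 < ε) :
    1 - (ε : ℝ) ≤ (shiftCoupling ε).real Sgt := by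
  refine (ENNReal.ofReal_le_iff_le_toReal (measure_ne_top _ _)).1 ?_
  calc
    ENNReal.ofReal (1 - ε) = mI (Ioi ε) := (unitInterval.volume_Ioi ε).symm
    _ = volume (circleRep ⁻¹' Ioi ε) :=
      (measurePreserving_circleRep.measure_preimage measurableSet_Ioi.nullMeasurableSet).symm
    _ ≤ volume ((fun z => (circleRep z, circleRep (z - ((ε : ℝ) : UnitAddCircle)))) ⁻¹' Sgt) :=
      measure_mono fun z hz => circleRep_sub_lt hε hz
    _ = shiftCoupling ε Sgt := (Measure.map_apply (measurable_shift ε) measSgt).symm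

lemma tendsto_shiftCoupling_Sgt :
    Tendsto (fun ε => (shiftCoupling ε).real Sgt) (𝓝[>] 0) (𝓝 1) := by
  have hlower : Tendsto (fun ε : unitInterval => 1 - (ε : ℝ)) (𝓝[>] 0) (𝓝 1) := by
    have hcont : Continuous fun ε : unitInterval => 1 - (ε : ℝ) := by fun_prop
    simpa using (hcont.tendsto 0).mono_left nhdsWithin_le_nhds
  refine tendsto_of_tendsto_of_tendsto_of_le_of_le' hlower tendsto_const_nhds ?_
    (Eventually.of_forall fun _ => measureReal_le_one)
  filter_upwards [self_mem_nhdsWithin] with ε hε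
  exact one_sub_le_shiftCoupling_Sgt hε

end Shift

lemma exists_isFAP_hasLebesgueMarginals_Sgt_eq_one :
    ∃ P : MSet (unitInterval × unitInterval) → unitInterval,
      IsFAP P ∧ HasLebesgueMarginals P ∧ (P ⟨Sgt, measSgt⟩ : ℝ) = 1 := by
  have : (𝓝[>] (0 : unitInterval)).NeBot := nhdsGT_neBot_of_exists_gt ⟨1, zero_lt_one⟩
  obtain ⟨P, hP, hlim⟩ := exists_isFAP_eq_of_tendsto (𝓝[>] 0) shiftCoupling
  refine ⟨P, hP, ⟨fun B hB => hlim _ _ ?_, fun B hB => hlim _ _ ?_⟩,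
    hlim _ _ tendsto_shiftCoupling_Sgt⟩
  · refine tendsto_const_nhds.congr fun ε => ?_
    rw [← map_fst_shiftCoupling ε, Measure.map_apply measurable_fst hB, Measure.real]
  · refine tendsto_const_nhds.congr fun ε => ?_
    rw [← map_snd_shiftCoupling ε, Measure.map_apply measurable_snd hB, Measure.real]

lemma integral_add_integral_nonpos_of_add_le_cEx {f₁ f₂ : unitInterval → ℝ}
    (h₁ : Integrable f₁ mI) (h₂ : Integrable f₂ mI)
    (h : ∀ x y, cEx (x, y) ≠ ⊤ → f₁ x + f₂ y ≤ (cEx (x, y)).toReal) :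
    (∫ x, f₁ x ∂mI) + (∫ y, f₂ y ∂mI) ≤ 0 := by
  refine integral_add_integral_nonpos h₁ h₂ fun x y hyx => ?_
  have hcost : cEx (x, y) = 0 := cEx_eq_zero_of_mem_Sgt hyx
  simpa [hcost] using h x y

/-- for the cost `c` above: (a) any integrable `f₁, f₂` with
`f₁(x) + f₂(y) ≤ c(x,y)` pointwise satisfy `m(f₁) + m(f₂) ≤ 0`; (b) `inf_{Q ∈ Γ} Q(c) = 1`
(duality gap over σ-additive couplings); (c) any finitely additive `P ∈ M` with
`P(π₁ > π₂) = 1` has `P(c) = 0`; (d) `inf_{Q ∈ M} Q(c) = 0`; and (e) the dual supremum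
over `M` equals `0` as well, i.e. duality holds over `M`. (The pointwise constraint
`f₁(x) + f₂(y) ≤ c(x,y)` with `c` `[0,∞]`-valued is encoded via `toReal` and `⊤`.) -/
theorem duality_gap_example :
    (∀ f₁ f₂ : unitInterval → ℝ, Measurable f₁ → Measurable f₂ →
      Integrable f₁ mI → Integrable f₂ mI →
      (∀ x y : unitInterval, cEx (x, y) ≠ ⊤ → f₁ x + f₂ y ≤ (cEx (x, y)).toReal) →
      (∫ x, f₁ x ∂mI) + (∫ y, f₂ y ∂mI) ≤ 0) ∧
    ((⨅ Q : {Q : Measure (unitInterval × unitInterval) // IsProbabilityMeasure Q ∧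
        Q.map Prod.fst = mI ∧ Q.map Prod.snd = mI}, ∫⁻ p, cEx p ∂Q.1) = 1) ∧
    (∀ P : MSet (unitInterval × unitInterval) → unitInterval,
      IsFAP P → HasLebesgueMarginals P → (P ⟨Sgt, measSgt⟩ : ℝ) = 1 →
        fapIntTop P cEx = 0) ∧
    ((⨅ P : {P : MSet (unitInterval × unitInterval) → unitInterval //
        IsFAP P ∧ HasLebesgueMarginals P}, fapIntTop P.1 cEx) = 0) ∧
    ((⨆ (f : (unitInterval → ℝ) × (unitInterval → ℝ))
        (_ : Measurable f.1 ∧ Measurable f.2 ∧ Integrable f.1 mI ∧ Integrable f.2 mI ∧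
          ∀ x y : unitInterval,
            f.1 x + f.2 y ≤ (cEx (x, y)).toReal ∨ cEx (x, y) = ⊤),
        ENNReal.ofReal ((∫ x, f.1 x ∂mI) + (∫ y, f.2 y ∂mI))) = 0) := by
  have fapIntTop_cEx {P} (hP : IsFAP P) (hSgt : (P ⟨Sgt, measSgt⟩ : ℝ) = 1) :
      fapIntTop P cEx = 0 :=
    hP.fapIntTop_eq_zero hSgt fun _ => cEx_eq_zero_of_mem_Sgt
  refine ⟨fun f₁ f₂ _ _ h₁ h₂ h => integral_add_integral_nonpos_of_add_le_cEx h₁ h₂ h,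
    iInf_lintegral_cEx_eq_one, fun P hP _ hSgt => fapIntTop_cEx hP hSgt, ?_, ?_⟩
  · obtain ⟨P, hP, hmarg, hSgt⟩ := exists_isFAP_hasLebesgueMarginals_Sgt_eq_one
    exact le_antisymm (iInf_le_of_le ⟨P, hP, hmarg⟩ (fapIntTop_cEx hP hSgt).le) zero_le
  · refine le_antisymm (iSup₂_le ?_) zero_le
    rintro ⟨f₁, f₂⟩ ⟨-, -, h₁, h₂, h⟩
    exact (ENNReal.ofReal_of_nonpos (integral_add_integral_nonpos_of_add_le_cEx h₁ h₂
      fun x y hxy => (h x y).resolve_right hxy)).le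

end FATransport
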